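/- arXiv:2212.07198 — 2 statements merged into one kernel-verified Lean document; each statement's English description precedes it below -/
import Mathlib

section
/- Let D be a positive integer that is not a perfect square. If T_D = 2L for some positive integer L, Q_L is even, and Q_L is not divisible by 4, then a_L ≡ D (mod 2). -/
/-- The sequence of complete quotients of the continued fraction of `x`:
`α₀ = x`, `α_{k+1} = 1/(αₖ - ⌊αₖ⌋)`. -/
noncomputable def cfAlpha (x : ℝ) : ℕ → ℝ
  | 0 => x
  | k + 1 => 1 / (cfAlpha x k - (⌊cfAlpha x k⌋ : ℝ))

/-- The partial quotients of the continued fraction of `x`: `aₖ = ⌊αₖ⌋`. -/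
noncomputable def cfA (x : ℝ) (k : ℕ) : ℤ :=
  ⌊cfAlpha x k⌋

/-- The length of the minimal period of the continued fraction of `x`:
the least `l > 0` with `a_{k+l} = a_k` for all `k ≥ 1`. -/
noncomputable def cfPeriod (x : ℝ) : ℕ :=
  sInf {l : ℕ | 0 < l ∧ ∀ k : ℕ, 1 ≤ k → cfA x (k + l) = cfA x k}

/-- The integer sequences `(Pₖ, Qₖ)` attached to the continued fraction of `√D`:
`P₀ = 0`, `Q₀ = 1`, `P_{k+1} = aₖ·Qₖ − Pₖ`, `Q_{k+1} = (D − P_{k+1}²)/Qₖ`. -/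
noncomputable def cfPQ (D : ℕ) : ℕ → ℤ × ℤ
  | 0 => (0, 1)
  | k + 1 =>
    ((cfA (Real.sqrt D) k) * (cfPQ D k).2 - (cfPQ D k).1,
      ((D : ℤ) - ((cfA (Real.sqrt D) k) * (cfPQ D k).2 - (cfPQ D k).1) ^ 2) / (cfPQ D k).2)

/-- The basic invariants of the expansion. -/
theorem cf_inv (D : ℕ) (hD : 0 < D) (hns : ¬ IsSquare D) (k : ℕ) :
    0 < (cfPQ D k).2 ∧ (cfPQ D k).2 ∣ (D : ℤ) - (cfPQ D k).1 ^ 2 ∧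
    cfAlpha (Real.sqrt D) k * (cfPQ D k).2 = Real.sqrt D + (cfPQ D k).1 ∧
    ((cfPQ D k).1 : ℝ) < Real.sqrt D ∧ 1 < cfAlpha (Real.sqrt D) k := by
  have hirr : Irrational (Real.sqrt D) := by
    rw [irrational_sqrt_natCast_iff]; exact hns
  have hs2 : Real.sqrt D * Real.sqrt D = D := Real.mul_self_sqrt (by positivity)
  have hs0 : 0 ≤ Real.sqrt D := Real.sqrt_nonneg _
  induction k with
  | zero =>
    have hD1 : (1 : ℝ) < D := by
      have : D ≠ 1 := by rintro rfl; exact hns ⟨1, rfl⟩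
      have : 1 < D := by omega
      exact_mod_cast this
    have : 1 < Real.sqrt D := by nlinarith
    refine ⟨by simp [cfPQ], by simp [cfPQ], by simp [cfPQ, cfAlpha], ?_, by simpa [cfAlpha] using this⟩
    simp only [cfPQ]; push_cast; linarith
  | succ k ih =>
    obtain ⟨hQ, hdvd, hal, hP, h1⟩ := ih
    have hfl := Int.floor_le (cfAlpha (Real.sqrt D) k)
    have hfl2 := Int.lt_floor_add_one (cfAlpha (Real.sqrt D) k)
    have ha1 : (1 : ℤ) ≤ cfA (Real.sqrt D) k := Int.le_floor.2 (by simpa using h1.le)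
    simp only [cfPQ, cfAlpha]
    change (cfA (Real.sqrt D) k : ℝ) ≤ _ at hfl
    change _ < (cfA (Real.sqrt D) k : ℝ) + 1 at hfl2
    change _ ∧ _ ∧ 1 / (cfAlpha (Real.sqrt D) k - (cfA (Real.sqrt D) k : ℝ)) * _ = _ ∧ _ ∧
      1 < 1 / (cfAlpha (Real.sqrt D) k - (cfA (Real.sqrt D) k : ℝ))
    generalize cfAlpha (Real.sqrt D) k = α at *
    generalize cfA (Real.sqrt D) k = a at *
    generalize (cfPQ D k).1 = P at *
    generalize (cfPQ D k).2 = Q at *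
    generalize Real.sqrt D = s at *
    obtain ⟨P', hP'⟩ : ∃ P', P' = a * Q - P := ⟨_, rfl⟩
    rw [← hP']
    have hd : Q ∣ (D : ℤ) - P' ^ 2 := by
      have : (D : ℤ) - P' ^ 2 = (D - P ^ 2) + Q * (2 * a * P - a ^ 2 * Q) := by rw [hP']; ring
      rw [this]
      exact dvd_add hdvd (dvd_mul_right _ _)
    obtain ⟨Q', hQ'⟩ := hd
    have hdiv : ((D : ℤ) - P' ^ 2) / Q = Q' := by
      rw [hQ']; exact Int.mul_ediv_cancel_left _ hQ.ne'
    rw [hdiv]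
    have hQr : (0 : ℝ) < Q := by exact_mod_cast hQ
    have har : (1 : ℝ) ≤ a := by exact_mod_cast ha1
    have hPr : (P' : ℝ) = a * Q - P := by rw [hP']; push_cast; ring
    have hQQ : (D : ℝ) - P' ^ 2 = Q * Q' := by exact_mod_cast hQ'
    have hne : s ≠ P' := fun h => hirr ⟨P', by simp [h]⟩
    have hfr : (α - a) * Q = s - P' := by rw [sub_mul, hal, hPr]; ring
    have hlt : (P' : ℝ) < s := by
      rcases lt_or_eq_of_le (show (P' : ℝ) ≤ s by nlinarith) with h | h
      · exact h
      · exact absurd h.symm hne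
    have hpos : 0 < α - a := by
      by_contra hc
      nlinarith
    have hsum : (Q : ℝ) < s + P' := by rw [hPr]; nlinarith
    have hprod : (s - P') * (s + P') = Q * Q' := by rw [← hQQ, ← hs2]; ring
    have hQ'r : (0 : ℝ) < Q' := by
      have : 0 < (s - P') * (s + P') := mul_pos (by linarith) (by linarith)
      rw [hprod] at this
      exact pos_of_mul_pos_right this hQr.le
    refine ⟨by exact_mod_cast hQ'r, ⟨Q, by rw [hQ']; ring⟩, ?_, hlt, ?_⟩
    · rw [one_div, inv_mul_eq_iff_eq_mul₀ hpos.ne']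
      have : (Q : ℝ) * Q' = Q * ((α - a) * (s + P')) := by
        rw [← hprod, ← hfr]; ring
      exact mul_left_cancel₀ hQr.ne' this
    · rw [lt_div_iff₀ hpos]; linarith

theorem cf_P_succ (D k : ℕ) :
    (cfPQ D (k+1)).1 = cfA (Real.sqrt D) k * (cfPQ D k).2 - (cfPQ D k).1 := rfl

theorem cf_QQ (D : ℕ) (hD : 0 < D) (hns : ¬ IsSquare D) (k : ℕ) :
    (cfPQ D k).2 * (cfPQ D (k+1)).2 = (D : ℤ) - (cfPQ D (k+1)).1 ^ 2 := by
  obtain ⟨hQ, hdvd, -⟩ := cf_inv D hD hns k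
  change (cfPQ D k).2 * (((D : ℤ) - (cfPQ D (k+1)).1 ^ 2) / (cfPQ D k).2) = _
  apply Int.mul_ediv_cancel'
  rw [cf_P_succ]
  generalize cfA (Real.sqrt D) k = a at *
  generalize (cfPQ D k).1 = P at *
  generalize (cfPQ D k).2 = Q at *
  have : (D : ℤ) - (a * Q - P) ^ 2 = (D - P ^ 2) + Q * (2 * a * P - a ^ 2 * Q) := by ring
  rw [this]
  exact dvd_add hdvd (dvd_mul_right _ _)

theorem cf_fl (x : ℝ) (k : ℕ) :
    (cfA x k : ℝ) ≤ cfAlpha x k ∧ cfAlpha x k < cfA x k + 1 :=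
  ⟨Int.floor_le _, Int.lt_floor_add_one _⟩

/-- `√D - P_{k+1} < Q_k`. -/
theorem cf_bd1 (D : ℕ) (hD : 0 < D) (hns : ¬ IsSquare D) (k : ℕ) :
    Real.sqrt D - (cfPQ D (k+1)).1 < (cfPQ D k).2 := by
  obtain ⟨hQ, -, hal, -⟩ := cf_inv D hD hns k
  have hf := (cf_fl (Real.sqrt D) k).2
  have hQr : (0 : ℝ) < (cfPQ D k).2 := by exact_mod_cast hQ
  rw [cf_P_succ]; push_cast
  nlinarith

/-- `√D - P_{k+1} < Q_{k+1}`. -/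
theorem cf_bd2 (D : ℕ) (hD : 0 < D) (hns : ¬ IsSquare D) (k : ℕ) :
    Real.sqrt D - (cfPQ D (k+1)).1 < (cfPQ D (k+1)).2 := by
  obtain ⟨hQ, -, hal, hP, h1⟩ := cf_inv D hD hns k
  obtain ⟨hQ', -, -, hP', -⟩ := cf_inv D hD hns (k+1)
  have ha1 : (1 : ℤ) ≤ cfA (Real.sqrt D) k := Int.le_floor.2 (by simpa using h1.le)
  have har : (1 : ℝ) ≤ cfA (Real.sqrt D) k := by exact_mod_cast ha1
  have hQr : (0 : ℝ) < (cfPQ D k).2 := by exact_mod_cast hQ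
  have hs2 : Real.sqrt D * Real.sqrt D = D := Real.mul_self_sqrt (by positivity)
  have hQQ : ((cfPQ D k).2 : ℝ) * (cfPQ D (k+1)).2 = (D : ℝ) - (cfPQ D (k+1)).1 ^ 2 := by
    exact_mod_cast cf_QQ D hD hns k
  have hPs : ((cfPQ D (k+1)).1 : ℝ) = cfA (Real.sqrt D) k * (cfPQ D k).2 - (cfPQ D k).1 := by
    rw [cf_P_succ]; push_cast; ring
  have hsum : ((cfPQ D k).2 : ℝ) < Real.sqrt D + (cfPQ D (k+1)).1 := by rw [hPs]; nlinarith
  have h := mul_lt_mul_of_pos_left hsum (sub_pos.2 hP')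
  have : (Real.sqrt D - (cfPQ D (k+1)).1) * (Real.sqrt D + (cfPQ D (k+1)).1)
      = (cfPQ D k).2 * (cfPQ D (k+1)).2 := by linear_combination hs2 - hQQ
  rw [this, mul_comm] at h
  exact lt_of_mul_lt_mul_left h hQr.le

theorem cf_key (D : ℕ) (hD : 0 < D) (hns : ¬ IsSquare D) (m k : ℕ)
    (hQ : (cfPQ D (m+1)).2 = (cfPQ D k).2)
    (hd : (cfPQ D k).2 ∣ (cfPQ D (m+1)).1 - (cfPQ D (k+1)).1) :
    (cfPQ D (m+1)).1 = (cfPQ D (k+1)).1 := by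
  have h1 := cf_bd2 D hD hns m
  have h2 := cf_bd1 D hD hns k
  have h3 := (cf_inv D hD hns (m+1)).2.2.2.1
  have h4 := (cf_inv D hD hns (k+1)).2.2.2.1
  rw [hQ] at h1
  have h5 : (cfPQ D (m+1)).1 - (cfPQ D (k+1)).1 < (cfPQ D k).2 := by
    have : (((cfPQ D (m+1)).1 : ℝ)) - (cfPQ D (k+1)).1 < (cfPQ D k).2 := by linarith
    exact_mod_cast this
  have h6 : -(cfPQ D k).2 < (cfPQ D (m+1)).1 - (cfPQ D (k+1)).1 := by
    have : -((cfPQ D k).2 : ℝ) < (((cfPQ D (m+1)).1 : ℝ)) - (cfPQ D (k+1)).1 := by linarith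
    exact_mod_cast this
  have := Int.eq_zero_of_abs_lt_dvd hd (abs_lt.2 ⟨h6, h5⟩)
  linarith

/-- `α_k α_{k+1} = a_k α_{k+1} + 1`. -/
theorem cf_step (D : ℕ) (hD : 0 < D) (hns : ¬ IsSquare D) (k : ℕ) :
    (cfAlpha (Real.sqrt D) k - cfA (Real.sqrt D) k) * cfAlpha (Real.sqrt D) (k+1) = 1 := by
  have h := (cf_inv D hD hns (k+1)).2.2.2.2
  simp only [cfAlpha] at h ⊢
  change 1 < 1 / (cfAlpha (Real.sqrt D) k - (cfA (Real.sqrt D) k : ℝ)) at h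
  change _ * (1 / (cfAlpha (Real.sqrt D) k - (cfA (Real.sqrt D) k : ℝ))) = 1
  apply mul_one_div_cancel
  intro h0
  rw [h0] at h
  norm_num at h

theorem cf_diff (D : ℕ) (hD : 0 < D) (hns : ¬ IsSquare D) (l : ℕ)
    (h : ∀ k : ℕ, 1 ≤ k → cfA (Real.sqrt D) (k + l) = cfA (Real.sqrt D) k) (k : ℕ) (hk : 1 ≤ k) :
    2 * |cfAlpha (Real.sqrt D) (k+l) - cfAlpha (Real.sqrt D) k| ≤
      |cfAlpha (Real.sqrt D) (k+2+l) - cfAlpha (Real.sqrt D) (k+2)| := by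
  have e0 := h k hk
  have e1 := h (k+1) (by omega)
  have s0 := cf_step D hD hns k
  have s1 := cf_step D hD hns (k+1)
  have t0 := cf_step D hD hns (k+l)
  have t1 := cf_step D hD hns (k+1+l)
  have i1 := (cf_inv D hD hns (k+1)).2.2.2.2
  have i2 := (cf_inv D hD hns (k+2)).2.2.2.2
  have j1 := (cf_inv D hD hns (k+1+l)).2.2.2.2
  have j2 := (cf_inv D hD hns (k+2+l)).2.2.2.2
  have ha1 : (1 : ℤ) ≤ cfA (Real.sqrt D) (k+1) := Int.le_floor.2 (by simpa using i1.le)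
  have har : (1 : ℝ) ≤ cfA (Real.sqrt D) (k+1) := by exact_mod_cast ha1
  rw [e0, show k + l + 1 = k + 1 + l by ring] at t0
  rw [e1, show k + 1 + l + 1 = k + 2 + l by ring] at t1
  rw [show k + 1 + 1 = k + 2 by ring] at s1
  generalize cfAlpha (Real.sqrt D) k = x0 at *
  generalize cfAlpha (Real.sqrt D) (k+1) = x1 at *
  generalize cfAlpha (Real.sqrt D) (k+2) = x2 at *
  generalize cfAlpha (Real.sqrt D) (k+l) = y0 at *
  generalize cfAlpha (Real.sqrt D) (k+1+l) = y1 at *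
  generalize cfAlpha (Real.sqrt D) (k+2+l) = y2 at *
  generalize (cfA (Real.sqrt D) k : ℝ) = a at *
  generalize (cfA (Real.sqrt D) (k+1) : ℝ) = b at *
  have A : x1 - y1 = (y0 - x0) * (x1 * y1) := by linear_combination y1 * s0 - x1 * t0
  have B : x2 - y2 = (y1 - x1) * (x2 * y2) := by linear_combination y2 * s1 - x2 * t1
  have C : y2 - x2 = (y0 - x0) * ((x1 * x2) * (y1 * y2)) := by
    linear_combination (-1) * B + (x2 * y2) * A
  have hx : 2 ≤ x1 * x2 := by nlinarith
  have hy : 2 ≤ y1 * y2 := by nlinarith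
  have hxy : 2 ≤ (x1 * x2) * (y1 * y2) := by nlinarith
  rw [C, abs_mul, abs_of_pos (by linarith : 0 < (x1 * x2) * (y1 * y2)), mul_comm]
  exact mul_le_mul_of_nonneg_left hxy (abs_nonneg _)

theorem cf_alpha_eq (D : ℕ) (hD : 0 < D) (hns : ¬ IsSquare D) (l : ℕ)
    (h : ∀ k : ℕ, 1 ≤ k → cfA (Real.sqrt D) (k + l) = cfA (Real.sqrt D) k) :
    cfAlpha (Real.sqrt D) (1+l) = cfAlpha (Real.sqrt D) 1 := by
  have key : ∀ n : ℕ, 2 ^ n * |cfAlpha (Real.sqrt D) (1+l) - cfAlpha (Real.sqrt D) 1| ≤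
      |cfAlpha (Real.sqrt D) (1+2*n+l) - cfAlpha (Real.sqrt D) (1+2*n)| := by
    intro n
    induction n with
    | zero => simp
    | succ n ih =>
      have := cf_diff D hD hns l h (1+2*n) (by omega)
      rw [show 1 + 2 * (n+1) = 1 + 2 * n + 2 by ring, pow_succ]
      linarith
  have bd : ∀ n : ℕ, 2 ^ n * |cfAlpha (Real.sqrt D) (1+l) - cfAlpha (Real.sqrt D) 1| ≤ 1 := by
    intro n
    refine (key n).trans ?_
    have f1 := cf_fl (Real.sqrt D) (1+2*n+l)
    have f2 := cf_fl (Real.sqrt D) (1+2*n)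
    rw [h (1+2*n) (by omega)] at f1
    rw [abs_le]
    constructor <;> linarith
  by_contra hne
  have hpos : 0 < |cfAlpha (Real.sqrt D) (1+l) - cfAlpha (Real.sqrt D) 1| :=
    abs_pos.2 (sub_ne_zero.2 hne)
  obtain ⟨n, hn⟩ := pow_unbounded_of_one_lt
    (1 / |cfAlpha (Real.sqrt D) (1+l) - cfAlpha (Real.sqrt D) 1|) (by norm_num : (1:ℝ) < 2)
  rw [div_lt_iff₀ hpos] at hn
  linarith [bd n]

theorem cf_PQ_eq (D : ℕ) (hD : 0 < D) (hns : ¬ IsSquare D) (m k : ℕ)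
    (h : cfAlpha (Real.sqrt D) m = cfAlpha (Real.sqrt D) k) :
    (cfPQ D m).1 = (cfPQ D k).1 ∧ (cfPQ D m).2 = (cfPQ D k).2 := by
  have hirr : Irrational (Real.sqrt D) := by
    rw [irrational_sqrt_natCast_iff]; exact hns
  obtain ⟨hQ, -, e1, -, -⟩ := cf_inv D hD hns m
  obtain ⟨hQ', -, e2, -, -⟩ := cf_inv D hD hns k
  rw [h] at e1
  have e3 : (Real.sqrt D + (cfPQ D m).1) * (cfPQ D k).2
      = (Real.sqrt D + (cfPQ D k).1) * (cfPQ D m).2 := by rw [← e1, ← e2]; ring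
  have hQe : (cfPQ D m).2 = (cfPQ D k).2 := by
    by_contra hne
    have hne' : ((cfPQ D m).2 : ℝ) - (cfPQ D k).2 ≠ 0 := by
      rw [sub_ne_zero]; exact_mod_cast hne
    apply hirr
    refine ⟨((cfPQ D m).1 * (cfPQ D k).2 - (cfPQ D k).1 * (cfPQ D m).2 : ℚ) /
      ((cfPQ D m).2 - (cfPQ D k).2), ?_⟩
    push_cast
    rw [div_eq_iff hne']
    linarith
  refine ⟨?_, hQe⟩
  rw [hQe] at e1
  have : ((cfPQ D m).1 : ℝ) = (cfPQ D k).1 := by linarith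
  exact_mod_cast this

theorem stmt_5 (D : ℕ) (hD : 0 < D) (hns : ¬ IsSquare D) (L : ℕ) (hL : 0 < L)
    (hT : cfPeriod (Real.sqrt D) = 2 * L)
    (h2 : 2 ∣ (cfPQ D L).2) (h4 : ¬ (4 ∣ (cfPQ D L).2)) :
    cfA (Real.sqrt D) L ≡ (D : ℤ) [ZMOD 2] := by
  have hper : ∀ k : ℕ, 1 ≤ k → cfA (Real.sqrt D) (k + 2 * L) = cfA (Real.sqrt D) k := by
    have hne : {l : ℕ | 0 < l ∧ ∀ k : ℕ, 1 ≤ k →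
        cfA (Real.sqrt D) (k + l) = cfA (Real.sqrt D) k}.Nonempty := by
      apply Nat.nonempty_of_pos_sInf
      change 0 < cfPeriod (Real.sqrt D)
      omega
    have := Nat.sInf_mem hne
    change cfPeriod (Real.sqrt D) ∈ _ at this
    rw [hT] at this
    exact this.2
  obtain ⟨hP1, hQ1⟩ := cf_PQ_eq D hD hns _ _ (cf_alpha_eq D hD hns _ hper)
  have sym : ∀ j m : ℕ, j + (m + 1) = 2 * L →
      (cfPQ D (m+1)).2 = (cfPQ D j).2 ∧ (cfPQ D (m+1)).1 = (cfPQ D (j+1)).1 := by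
    intro j
    induction j with
    | zero =>
      intro m hm
      have hQ : (cfPQ D (m+1)).2 = (cfPQ D 0).2 := by
        have q1 := cf_QQ D hD hns (m+1)
        have q2 := cf_QQ D hD hns 0
        have hp := (cf_inv D hD hns 1).1
        rw [show m + 1 + 1 = 1 + 2 * L by omega, hP1, hQ1] at q1
        rw [zero_add] at q2
        exact mul_right_cancel₀ hp.ne' (q1.trans q2.symm)
      exact ⟨hQ, cf_key D hD hns m 0 hQ (by simp [cfPQ])⟩
    | succ j ih =>
      intro m hm
      obtain ⟨iQ, iP⟩ := ih (m+1) (by omega)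
      have hQ : (cfPQ D (m+1)).2 = (cfPQ D (j+1)).2 := by
        have q1 := cf_QQ D hD hns (m+1)
        have q2 := cf_QQ D hD hns j
        have hp := (cf_inv D hD hns j).1
        rw [iQ, iP, ← q2, mul_comm] at q1
        exact mul_left_cancel₀ hp.ne' q1
      refine ⟨hQ, cf_key D hD hns m (j+1) hQ ?_⟩
      have p1 := cf_P_succ D (m+1)
      have p2 := cf_P_succ D (j+1)
      rw [iP, hQ] at p1
      refine ⟨cfA (Real.sqrt D) (m+1) - cfA (Real.sqrt D) (j+1), ?_⟩
      linear_combination p1 - p2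
  obtain ⟨n, rfl⟩ : ∃ n, L = n + 1 := ⟨L - 1, by omega⟩
  have hs := (sym (n+1) n (by omega)).2
  rw [cf_P_succ D (n+1)] at hs
  have hQQ := cf_QQ D hD hns n
  generalize cfA (Real.sqrt D) (n+1) = a at *
  generalize (cfPQ D (n+1)).1 = P at *
  generalize (cfPQ D (n+1)).2 = Q at *
  obtain ⟨q, rfl⟩ := h2
  have hq : q % 2 = 1 := by omega
  have hPa : P = a * q := by linarith
  have hDe : (2 : ℤ) ∣ D - P ^ 2 := ⟨(cfPQ D n).2 * q, by rw [← hQQ]; ring⟩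
  have hqo : Odd q := Int.odd_iff.2 hq
  have h5 : Even ((D : ℤ) - P ^ 2) := even_iff_two_dvd.2 hDe
  rw [hPa] at h5
  apply Int.ModEq.symm
  rw [Int.modEq_iff_dvd, ← even_iff_two_dvd]
  have hqn : ¬ Even q := by rwa [Int.not_even_iff_odd]
  simp only [Int.even_sub, Int.even_pow, Int.even_mul] at h5 ⊢
  tauto
end

section
/- Let D be a positive integer that is not a perfect square. If T_D = 2L for some positive integer L and Q_L = 2, then P_L = a_L and a_L ∈ {⌊√D⌋ − 1, ⌊√D⌋}. -/
/-- Invariant of the continued fraction algorithm for `√D`. -/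
def CfInv (D : ℕ) (k : ℕ) : Prop :=
  0 < (cfPQ D k).2 ∧ (cfPQ D k).2 ∣ (D : ℤ) - (cfPQ D k).1 ^ 2 ∧
  cfAlpha (Real.sqrt D) k * ((cfPQ D k).2 : ℝ) = Real.sqrt D + ((cfPQ D k).1 : ℝ) ∧
  0 ≤ (cfPQ D k).1 ∧ ((cfPQ D k).1 : ℝ) < Real.sqrt D ∧
  ((cfPQ D k).2 : ℝ) ≤ Real.sqrt D + ((cfPQ D k).1 : ℝ)

theorem sqrt_ne_int (D : ℕ) (hns : ¬ IsSquare D) (z : ℤ) : Real.sqrt D ≠ (z : ℝ) := by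
  intro h
  have h1 : (Real.sqrt D) ^ 2 = (D : ℝ) := Real.sq_sqrt (Nat.cast_nonneg D)
  rw [h] at h1
  have h2 : z ^ 2 = (D : ℤ) := by exact_mod_cast h1
  apply hns
  refine ⟨z.natAbs, ?_⟩
  zify
  rw [abs_mul_abs_self, ← h2, sq]

theorem cfInv_zero (D : ℕ) (hD : 0 < D) : CfInv D 0 := by
  have h1 : (1 : ℝ) ≤ Real.sqrt D := by
    rw [Real.one_le_sqrt]
    exact_mod_cast hD
  refine ⟨?_, ?_, ?_, ?_, ?_, ?_⟩ <;> simp [cfPQ, cfAlpha]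
  · exact hD
  · exact hD

theorem cfInv_step (D : ℕ) (hns : ¬ IsSquare D) (k : ℕ) (h : CfInv D k) :
    CfInv D (k + 1) ∧
    Real.sqrt D - ((cfPQ D (k + 1)).1 : ℝ) < ((cfPQ D (k + 1)).2 : ℝ) ∧
    Real.sqrt D - ((cfPQ D (k + 1)).1 : ℝ) < ((cfPQ D k).2 : ℝ) := by
  obtain ⟨hQ, hdvd, hα, hP, hPs, hQs⟩ := h
  have hs2 : (Real.sqrt D) ^ 2 = (D : ℝ) := Real.sq_sqrt (Nat.cast_nonneg D)
  have e1 : (cfPQ D (k + 1)).1 = cfA (Real.sqrt D) k * (cfPQ D k).2 - (cfPQ D k).1 := rfl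
  have e2 : (cfPQ D (k + 1)).2 = ((D : ℤ) - (cfPQ D (k + 1)).1 ^ 2) / (cfPQ D k).2 := rfl
  have e3 : cfAlpha (Real.sqrt D) (k + 1) =
      1 / (cfAlpha (Real.sqrt D) k - (cfA (Real.sqrt D) k : ℝ)) := rfl
  have f1 : (cfA (Real.sqrt D) k : ℝ) ≤ cfAlpha (Real.sqrt D) k := Int.floor_le _
  have f2 : cfAlpha (Real.sqrt D) k < (cfA (Real.sqrt D) k : ℝ) + 1 := Int.lt_floor_add_one _
  have hne := sqrt_ne_int D hns (cfPQ D (k + 1)).1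
  have hQr : (0 : ℝ) < ((cfPQ D k).2 : ℝ) := by exact_mod_cast hQ
  have hPr : (0 : ℝ) ≤ ((cfPQ D k).1 : ℝ) := by exact_mod_cast hP
  have hα1 : 1 ≤ cfAlpha (Real.sqrt D) k := by
    by_contra hc
    push Not at hc
    nlinarith
  have ha1 : 1 ≤ cfA (Real.sqrt D) k := by
    unfold cfA
    rw [Int.le_floor]
    exact_mod_cast hα1
  have hd : (cfPQ D k).2 ∣ (D : ℤ) - (cfPQ D (k + 1)).1 ^ 2 := by
    obtain ⟨c, hc⟩ := hdvd
    rw [e1]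
    refine ⟨c - cfA (Real.sqrt D) k ^ 2 * (cfPQ D k).2 +
      2 * cfA (Real.sqrt D) k * (cfPQ D k).1, ?_⟩
    linear_combination hc
  have e4 : (cfPQ D (k + 1)).2 * (cfPQ D k).2 = (D : ℤ) - (cfPQ D (k + 1)).1 ^ 2 := by
    rw [e2]
    exact Int.ediv_mul_cancel hd
  have e1r : ((cfPQ D (k + 1)).1 : ℝ) =
      (cfA (Real.sqrt D) k : ℝ) * ((cfPQ D k).2 : ℝ) - ((cfPQ D k).1 : ℝ) := by
    rw [e1]; push_cast; ring
  have e4r : ((cfPQ D (k + 1)).2 : ℝ) * ((cfPQ D k).2 : ℝ) =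
      (Real.sqrt D) ^ 2 - ((cfPQ D (k + 1)).1 : ℝ) ^ 2 := by
    rw [hs2]; exact_mod_cast e4
  have hd' : (cfPQ D (k + 1)).2 ∣ (D : ℤ) - (cfPQ D (k + 1)).1 ^ 2 := ⟨_, e4.symm⟩
  have ha1r : (1 : ℝ) ≤ (cfA (Real.sqrt D) k : ℝ) := by exact_mod_cast ha1
  unfold CfInv
  clear e1 e2 hd e4 hdvd hs2 
  generalize (cfPQ D (k + 1)).1 = P' at *
  generalize (cfPQ D (k + 1)).2 = Q' at *
  generalize (cfPQ D k).1 = P at *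
  generalize (cfPQ D k).2 = Q at *
  generalize cfA (Real.sqrt D) k = a at *
  generalize cfAlpha (Real.sqrt D) (k + 1) = α' at *
  generalize cfAlpha (Real.sqrt D) k = α at *
  generalize Real.sqrt D = s at *
  have g : s - (P' : ℝ) = (Q : ℝ) * (α - a) := by rw [e1r]; linear_combination -hα
  have g1 : (P' : ℝ) < s := by
    have : (P' : ℝ) ≤ s := by nlinarith
    exact lt_of_le_of_ne this (Ne.symm hne)
  have g2 : s - (P' : ℝ) < Q := by nlinarith
  have haQ : (Q : ℝ) ≤ a * Q := by nlinarith
  have g3 : (0 : ℝ) < P' := by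
    by_cases hc : (P : ℝ) < Q
    · linarith
    · linarith
  have g4 : (Q : ℝ) < s + P' := by linarith
  have hprod : (Q' : ℝ) * Q = (s - P') * (s + P') := by rw [e4r]; ring
  have g5 : (0 : ℝ) < Q' := by
    have : (0 : ℝ) < (Q' : ℝ) * Q := by
      rw [hprod]
      exact mul_pos (by linarith) (by linarith)
    exact pos_of_mul_pos_left this hQr.le
  have g6 : (Q' : ℝ) ≤ s + P' := by
    have : (Q' : ℝ) * Q ≤ (s + P') * Q := by
      rw [hprod]; nlinarith
    exact le_of_mul_le_mul_right this hQr
  have g7 : s - P' < (Q' : ℝ) := by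
    have : (s - P') * Q < (Q' : ℝ) * Q := by
      rw [hprod]
      exact mul_lt_mul_of_pos_left g4 (by linarith)
    exact lt_of_mul_lt_mul_right this hQr.le
  have g8 : 0 < α - a := by
    have : 0 < (Q : ℝ) * (α - a) := by rw [← g]; linarith
    exact pos_of_mul_pos_right this hQr.le
  refine ⟨⟨by exact_mod_cast g5, hd', ?_, by exact_mod_cast g3.le, g1, g6⟩, g7, g2⟩
  rw [e3, one_div, inv_mul_eq_div, div_eq_iff g8.ne']
  have : (Q' : ℝ) * Q = ((s + P') * (α - a)) * Q := by rw [hprod, g]; ring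
  exact mul_right_cancel₀ hQr.ne' this

theorem cfInv_all (D : ℕ) (hD : 0 < D) (hns : ¬ IsSquare D) (k : ℕ) : CfInv D k := by
  induction k with
  | zero => exact cfInv_zero D hD
  | succ k ih => exact (cfInv_step D hns k ih).1

theorem stmt_6 (D : ℕ) (hD : 0 < D) (hns : ¬ IsSquare D) (L : ℕ) (hL : 0 < L)
    (hT : cfPeriod (Real.sqrt D) = 2 * L) (hQ : (cfPQ D L).2 = 2) :
    (cfPQ D L).1 = cfA (Real.sqrt D) L ∧
      (cfA (Real.sqrt D) L = ⌊Real.sqrt D⌋ - 1 ∨ cfA (Real.sqrt D) L = ⌊Real.sqrt D⌋) := by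
  obtain ⟨k, rfl⟩ : ∃ k, L = k + 1 := ⟨L - 1, by omega⟩
  have h1 := cfInv_step D hns k (cfInv_all D hD hns k)
  have h2 := cfInv_step D hns (k + 1) (cfInv_all D hD hns (k + 1))
  obtain ⟨⟨-, -, -, -, hl, -⟩, hu, -⟩ := h1
  obtain ⟨⟨-, -, -, -, hl', -⟩, -, hu'⟩ := h2
  have e1 : (cfPQ D (k + 1 + 1)).1 =
    cfA (Real.sqrt D) (k + 1) * (cfPQ D (k + 1)).2 - (cfPQ D (k + 1)).1 := rfl
  rw [hQ] at e1 hu hu'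
  have b1 : (cfPQ D (k + 1)).1 ≤ ⌊Real.sqrt D⌋ := Int.le_floor.2 hl.le
  have b2 : (cfPQ D (k + 1 + 1)).1 ≤ ⌊Real.sqrt D⌋ := Int.le_floor.2 hl'.le
  have b3 : ⌊Real.sqrt D⌋ < (cfPQ D (k + 1)).1 + 2 := by
    rw [Int.floor_lt]; push_cast at hu ⊢; linarith
  have b4 : ⌊Real.sqrt D⌋ < (cfPQ D (k + 1 + 1)).1 + 2 := by
    rw [Int.floor_lt]; push_cast at hu' ⊢; linarith
  omega
end
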